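/- Let y : ℝ → ℝ be the solution of y'' = −2y³ with y(0) = 0, y'(0) = 1, and let K := ∫₀¹ ds/√(1 − s⁴). Then y is odd, y(−t) = −y(t) for all t, and y is antiperiodic with antiperiod 2K: y(t + 2K) = −y(t) for all t ∈ ℝ. -/

import Mathlib

open Real

/-- The complete elliptic integral `K(i) = ∫₀¹ ds/√(1 − s⁴)`. -/
noncomputable def Kell : ℝ := ∫ s in (0:ℝ)..1, 1 / Real.sqrt (1 - s ^ 4)

/-!
Reversing time about an instant of rest, or rotating by a half-turn about a passage through the
origin when the force is odd, maps solutions of `y'' = f y` to solutions with the same initial data;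
uniqueness makes these symmetries of `y`, and their composite is the translation by twice the time
from the origin to rest. The force `-2y³` brings the particle to rest at a first time `T`, and
conservation of `(y')² + y⁴ = 1` turns `T` into the integral `K` under the substitution `s = y t`.
-/

open Set Function

section Calculus

lemma exists_first_eq_of_continuousOn {α β : Type*} [ConditionallyCompleteLinearOrder α]
    [TopologicalSpace α] [OrderTopology α] [DenselyOrdered α] [LinearOrder β] [TopologicalSpace β]
    [OrderClosedTopology β] {g : α → β} {a b : α} {c : β} (hab : a ≤ b)
    (hg : ContinuousOn g (Icc a b)) (ha : c < g a) (hb : g b ≤ c) :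
    ∃ t ∈ Ioc a b, g t = c ∧ ∀ s ∈ Ico a t, c < g s := by
  have hcompact : IsCompact (Icc a b ∩ g ⁻¹' {c}) :=
    isCompact_Icc.of_isClosed_subset (hg.preimage_isClosed_of_isClosed isClosed_Icc
      isClosed_singleton) inter_subset_left
  obtain ⟨t, ⟨ht, hgt⟩, hleast⟩ := hcompact.exists_isLeast
    (intermediate_value_Icc' hab hg ⟨hb, ha.le⟩)
  have hat : a ≠ t := by rintro rfl; exact ha.ne' hgt
  refine ⟨t, ⟨ht.1.lt_of_ne hat, ht.2⟩, hgt, fun s hs => ?_⟩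
  by_contra! hle
  have hsb : s ≤ b := hs.2.le.trans ht.2
  obtain ⟨r, hr, hgr⟩ := intermediate_value_Icc' hs.1 (hg.mono (Icc_subset_Icc_right hsb))
    ⟨hle, ha.le⟩
  exact (hleast ⟨⟨hr.1, hr.2.trans hsb⟩, hgr⟩).not_gt (hr.2.trans_lt hs.2)

lemma integral_one_div_eq_sub_of_hasDerivAt {y v : ℝ → ℝ} {a b : ℝ} (hab : a ≤ b)
    (hyc : ContinuousOn y (Icc a b)) (hy : ∀ t ∈ Ioo a b, HasDerivAt y (v (y t)) t)
    (hv : ∀ t ∈ Ioo a b, 0 < v (y t)) : ∫ x in y a..y b, 1 / v x = b - a := by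
  have hsubst : ∫ t in a..b, 1 / v (y t) * v (y t) = ∫ x in y a..y b, 1 / v x :=
    intervalIntegral.integral_comp_mul_deriv_of_deriv_nonneg (g := fun x => 1 / v x)
      (by rwa [uIcc_of_le hab]) (by rwa [min_eq_left hab, max_eq_right hab])
      (by simpa only [min_eq_left hab, max_eq_right hab] using fun t ht => (hv t ht).le)
  calc ∫ x in y a..y b, 1 / v x = ∫ t in a..b, 1 / v (y t) * v (y t) := hsubst.symm
    _ = ∫ _ in a..b, (1 : ℝ) := intervalIntegral.integral_congr_Ioo_of_le hab
      fun t ht => one_div_mul_cancel (hv t ht).ne'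
    _ = b - a := integral_one

variable {E : Type*} [NormedAddCommGroup E] [NormedSpace ℝ E]

lemma isIntegralCurve_eq_of_locallyLipschitz {v : E → E} (hv : LocallyLipschitz v) {γ η : ℝ → E}
    (hγ : IsIntegralCurve γ fun _ => v) (hη : IsIntegralCurve η fun _ => v) {t₀ : ℝ}
    (h : γ t₀ = η t₀) : γ = η := by
  have hγc : Continuous γ := continuous_iff_continuousAt.2 fun t => (hγ t).continuousAt
  have hηc : Continuous η := continuous_iff_continuousAt.2 fun t => (hη t).continuousAt
  have hopen : IsOpen {t | γ t = η t} := isOpen_iff_mem_nhds.2 fun t (ht : γ t = η t) => by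
    obtain ⟨K, s, hs, hK⟩ := hv (γ t)
    exact ODE_solution_unique_of_eventually (v := fun _ => v) (s := fun _ => s)
      (.of_forall fun _ => hK)
      ((hγc.continuousAt.eventually_mem hs).mono fun r hr => ⟨hγ r, hr⟩)
      ((hηc.continuousAt.eventually_mem (ht ▸ hs)).mono fun r hr => ⟨hη r, hr⟩) ht
  have huniv : {t | γ t = η t} = univ :=
    IsClopen.eq_univ ⟨isClosed_eq hγc hηc, hopen⟩ ⟨t₀, h⟩
  exact funext fun t => huniv.ge (mem_univ t)

end Calculus

/-- The function `y`, defined for all times, solves Newton's equation `y'' = f y` for a force field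
`f` that depends on the position only. -/
structure IsNewtonSolution {E : Type*} [NormedAddCommGroup E] [NormedSpace ℝ E] (f : E → E)
    (y : ℝ → E) : Prop where
  differentiable : Differentiable ℝ y
  hasDerivAt_deriv (t : ℝ) : HasDerivAt (deriv y) (f (y t)) t

namespace IsNewtonSolution

section AnyDimension

variable {E : Type*} [NormedAddCommGroup E] [NormedSpace ℝ E] {f : E → E} {y u : ℝ → E}

lemma continuous_deriv (hy : IsNewtonSolution f y) : Continuous (deriv y) :=
  continuous_iff_continuousAt.2 fun t => (hy.hasDerivAt_deriv t).continuousAt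

lemma eq_of_eq_of_deriv_eq (hf : LocallyLipschitz f) (hy : IsNewtonSolution f y)
    (hu : IsNewtonSolution f u) {t₀ : ℝ} (h : y t₀ = u t₀) (h' : deriv y t₀ = deriv u t₀) :
    y = u := by
  have hv : LocallyLipschitz fun p : E × E => (p.2, f p.1) :=
    LipschitzWith.prod_snd.locallyLipschitz.prodMk
      (hf.comp LipschitzWith.prod_fst.locallyLipschitz)
  have hphase : (fun t => (y t, deriv y t)) = fun t => (u t, deriv u t) :=
    isIntegralCurve_eq_of_locallyLipschitz hv
      (fun t => (hy.differentiable t).hasDerivAt.prodMk (hy.hasDerivAt_deriv t))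
      (fun t => (hu.differentiable t).hasDerivAt.prodMk (hu.hasDerivAt_deriv t))
      (Prod.ext h h')
  exact funext fun t => congrArg Prod.fst (congrFun hphase t)

lemma comp_const_sub (hy : IsNewtonSolution f y) (c : ℝ) :
    IsNewtonSolution f fun t => y (c - t) where
  differentiable := hy.differentiable.comp (differentiable_id.const_sub c)
  hasDerivAt_deriv t := by
    have hderiv : (deriv fun t => y (c - t)) = fun t => -deriv y (c - t) :=
      funext fun s => deriv_comp_const_sub y c s
    simpa only [hderiv, neg_neg] using ((hy.hasDerivAt_deriv (c - t)).comp_const_sub c t).fun_neg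

lemma neg (hf : f.Odd) (hy : IsNewtonSolution f y) : IsNewtonSolution f fun t => -y t where
  differentiable := hy.differentiable.fun_neg
  hasDerivAt_deriv t := by
    simpa only [deriv.fun_neg', hf (y t)] using (hy.hasDerivAt_deriv t).fun_neg

lemma apply_two_mul_sub (hf : LocallyLipschitz f) (hy : IsNewtonSolution f y) {T : ℝ}
    (hT : deriv y T = 0) (t : ℝ) : y (2 * T - t) = y t := by
  have hTT : 2 * T - T = T := by ring
  refine congrFun ((hy.comp_const_sub (2 * T)).eq_of_eq_of_deriv_eq hf hy (t₀ := T) ?_ ?_) t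
  · rw [hTT]
  · rw [deriv_comp_const_sub, hTT, hT, neg_zero]

lemma odd (hf : LocallyLipschitz f) (hfodd : f.Odd) (hy : IsNewtonSolution f y) (h0 : y 0 = 0) :
    y.Odd := fun t => by
  have hrot : (fun t => -y (0 - t)) = y := by
    refine ((hy.comp_const_sub 0).neg hfodd).eq_of_eq_of_deriv_eq hf hy (t₀ := 0) ?_ ?_
    · rw [sub_zero, h0, neg_zero]
    · rw [deriv.fun_neg, deriv_comp_const_sub, sub_zero, neg_neg]
  rw [← congrFun hrot t, zero_sub, neg_neg]

lemma antiperiodic_two_mul (hf : LocallyLipschitz f) (hfodd : f.Odd) (hy : IsNewtonSolution f y)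
    (h0 : y 0 = 0) {T : ℝ} (hT : deriv y T = 0) : Antiperiodic y (2 * T) := fun t => calc
  y (t + 2 * T) = y (2 * T - -t) := by rw [sub_neg_eq_add, add_comm]
  _ = y (-t) := hy.apply_two_mul_sub hf hT (-t)
  _ = -y t := hy.odd hf hfodd h0 t

end AnyDimension

section OneDimensional

variable {f F y : ℝ → ℝ} {a b : ℝ}

lemma energy_eq (hy : IsNewtonSolution f y) (hF : ∀ x, HasDerivAt F (f x) x) (s t : ℝ) :
    deriv y s ^ 2 - 2 * F (y s) = deriv y t ^ 2 - 2 * F (y t) := by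
  have hE (t : ℝ) : HasDerivAt (fun t => deriv y t ^ 2 - 2 * F (y t)) 0 t := by
    refine (((hy.hasDerivAt_deriv t).pow 2).sub
      (((hF (y t)).comp t (hy.differentiable t).hasDerivAt).const_mul 2)).congr_deriv ?_
    push_cast
    ring
  exact is_const_of_deriv_eq_zero (fun t => (hE t).differentiableAt) (fun t => (hE t).deriv) s t

lemma integral_one_div_sqrt_eq_sub (hy : IsNewtonSolution f y)
    (hF : ∀ x, HasDerivAt F (f x) x) (hab : a ≤ b) (hpos : ∀ t ∈ Ioo a b, 0 < deriv y t) :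
    ∫ x in y a..y b, 1 / √(deriv y a ^ 2 + 2 * (F x - F (y a))) = b - a := by
  have hspeed : ∀ t ∈ Ioo a b, √(deriv y a ^ 2 + 2 * (F (y t) - F (y a))) = deriv y t :=
    fun t ht => by
      rw [← sqrt_sq (hpos t ht).le]
      congr 1
      linarith [hy.energy_eq hF a t]
  refine integral_one_div_eq_sub_of_hasDerivAt
    (v := fun x => √(deriv y a ^ 2 + 2 * (F x - F (y a)))) hab
    hy.differentiable.continuous.continuousOn (fun t ht => ?_) (fun t ht => ?_)
  · simpa only [hspeed t ht] using (hy.differentiable t).hasDerivAt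
  · simpa only [hspeed t ht] using hpos t ht

lemma exists_deriv_nonpos (hy : IsNewtonSolution f y) (hanti : AntitoneOn f (Ioi (y a)))
    (hneg : ∀ x, y a < x → f x < 0) : ∃ b, a ≤ b ∧ deriv y b ≤ 0 := by
  by_contra! hpos
  have hmono : StrictMonoOn y (Ici a) :=
    strictMonoOn_of_deriv_pos (convex_Ici a) hy.differentiable.continuous.continuousOn
      fun t ht => hpos t (interior_subset ht)
  -- Once past `c = a + 1`, the velocity decreases at least at the constant rate `-f (y c)`,
  -- which uses it up by time `b`.
  set c := a + 1
  have hac : a < c := lt_add_one a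
  have hyc : y a < y c := hmono self_mem_Ici hac.le hac
  have hfc : f (y c) < 0 := hneg (y c) hyc
  have hdecel : ∀ t ∈ interior (Ici c), deriv (deriv y) t ≤ f (y c) := fun t ht => by
    have hct : c ≤ t := interior_subset ht
    have hyct : y c ≤ y t := hmono.monotoneOn hac.le (hac.le.trans hct) hct
    rw [(hy.hasDerivAt_deriv t).deriv]
    exact hanti hyc (hyc.trans_le hyct) hyct
  set b := c + deriv y c / -f (y c)
  have hcb : c ≤ b :=
    le_add_of_nonneg_right (div_nonneg (hpos c hac.le).le (neg_nonneg.2 hfc.le))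
  have hdrop : deriv y b - deriv y c ≤ f (y c) * (b - c) :=
    (convex_Ici c).image_sub_le_mul_sub_of_deriv_le hy.continuous_deriv.continuousOn
      (fun t _ => (hy.hasDerivAt_deriv t).differentiableAt.differentiableWithinAt) hdecel
      c self_mem_Ici b hcb hcb
  have hrest : f (y c) * (b - c) = -deriv y c := by
    rw [add_sub_cancel_left, div_neg, mul_neg, mul_div_cancel₀ _ hfc.ne]
  linarith [hpos b (hac.le.trans hcb)]

lemma exists_first_deriv_eq_zero (hy : IsNewtonSolution f y) (hanti : AntitoneOn f (Ioi (y a)))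
    (hneg : ∀ x, y a < x → f x < 0) (ha : 0 < deriv y a) :
    ∃ T, a < T ∧ deriv y T = 0 ∧ ∀ t ∈ Ico a T, 0 < deriv y t := by
  obtain ⟨b, hab, hb⟩ := hy.exists_deriv_nonpos hanti hneg
  obtain ⟨T, hT, hT0, hpos⟩ :=
    exists_first_eq_of_continuousOn hab hy.continuous_deriv.continuousOn ha hb
  exact ⟨T, hT.1, hT0, hpos⟩

end OneDimensional

end IsNewtonSolution

/-- The force `-2x³` of the quartic oscillator, whose motion from the origin with unit velocity is
the Jacobi elliptic function `sn(·, i)`. -/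
def quarticForce (x : ℝ) : ℝ := -2 * x ^ 3

namespace quarticForce

lemma odd : quarticForce.Odd := fun x => by
  simp only [quarticForce]
  ring

lemma locallyLipschitz : LocallyLipschitz quarticForce :=
  ContDiff.locallyLipschitz (𝕂 := ℝ) (by unfold quarticForce; fun_prop)

lemma antitone : Antitone quarticForce := fun _ _ h =>
  mul_le_mul_of_nonpos_left (Odd.strictMono_pow (by decide) |>.monotone h) (by norm_num)

lemma neg_of_pos {x : ℝ} (hx : 0 < x) : quarticForce x < 0 :=
  mul_neg_of_neg_of_pos (by norm_num) (pow_pos hx 3)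

lemma hasDerivAt_neg_pow_four_div_two (x : ℝ) :
    HasDerivAt (fun x => -x ^ 4 / 2) (quarticForce x) x := by
  refine ((hasDerivAt_pow 4 x).fun_neg.div_const 2).congr_deriv ?_
  unfold quarticForce
  push_cast
  ring

end quarticForce

section QuarticOscillator

variable {y : ℝ → ℝ} {T : ℝ}

lemma quartic_eq_one_of_deriv_eq_zero (hy : IsNewtonSolution quarticForce y) (h0 : y 0 = 0)
    (h1 : deriv y 0 = 1) (hT : 0 ≤ y T) (hrest : deriv y T = 0) : y T = 1 := by
  have henergy := hy.energy_eq quarticForce.hasDerivAt_neg_pow_four_div_two T 0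
  rw [h0, h1, hrest] at henergy
  have hpow : y T ^ 4 = 1 := by linarith
  exact (pow_eq_one_iff_of_nonneg hT four_ne_zero).1 hpow

lemma Kell_eq_of_deriv_eq_zero (hy : IsNewtonSolution quarticForce y) (h0 : y 0 = 0)
    (h1 : deriv y 0 = 1) (hT : 0 < T) (hrest : deriv y T = 0)
    (hpos : ∀ t ∈ Ioo 0 T, 0 < deriv y t) : Kell = T := by
  have hmono : StrictMonoOn y (Icc 0 T) :=
    strictMonoOn_of_deriv_pos (convex_Icc 0 T) hy.differentiable.continuous.continuousOn
      (by rwa [interior_Icc])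
  have hyT : 0 ≤ y T := h0 ▸ hmono.monotoneOn (left_mem_Icc.2 hT.le) (right_mem_Icc.2 hT.le) hT.le
  calc Kell = ∫ x in y 0..y T, 1 / √(deriv y 0 ^ 2 + 2 * (-x ^ 4 / 2 - -y 0 ^ 4 / 2)) := by
        rw [quartic_eq_one_of_deriv_eq_zero hy h0 h1 hyT hrest, h0, h1, Kell]
        congr! 4 with x
        ring
    _ = T - 0 :=
        hy.integral_one_div_sqrt_eq_sub quarticForce.hasDerivAt_neg_pow_four_div_two hT.le hpos
    _ = T := sub_zero T

end QuarticOscillator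

/-- The solution of `y'' = -2y³`, `y 0 = 0`, `y' 0 = 1` (the Jacobi elliptic function
`sn(·, i)`) is odd, `y(−t) = −y(t)`, and antiperiodic with antiperiod `2K`:
`y(t + 2K) = −y(t)`, where `K = ∫₀¹ ds/√(1 − s⁴)`. -/
theorem stmt_4 (y : ℝ → ℝ)
    (hy1 : Differentiable ℝ y) (hy2 : Differentiable ℝ (deriv y))
    (hode : ∀ u : ℝ, deriv (deriv y) u = -2 * (y u) ^ 3)
    (h0 : y 0 = 0) (h1 : deriv y 0 = 1) :
    (∀ t : ℝ, y (-t) = -y t) ∧ (∀ t : ℝ, y (t + 2 * Kell) = -y t) := by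
  have hy : IsNewtonSolution quarticForce y :=
    ⟨hy1, fun t => (hy2 t).hasDerivAt.congr_deriv (hode t)⟩
  obtain ⟨T, hT, hrest, hpos⟩ := hy.exists_first_deriv_eq_zero (a := 0)
    (quarticForce.antitone.antitoneOn _)
    (fun x hx => quarticForce.neg_of_pos (h0 ▸ hx)) (h1 ▸ one_pos)
  have hK : Kell = T := Kell_eq_of_deriv_eq_zero hy h0 h1 hT hrest
    fun t ht => hpos t (Ioo_subset_Ico_self ht)
  refine ⟨hy.odd quarticForce.locallyLipschitz quarticForce.odd h0, ?_⟩
  rw [hK]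
  exact hy.antiperiodic_two_mul quarticForce.locallyLipschitz quarticForce.odd h0 hrest
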